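/- arXiv:1904.03088 — 2 statements merged into one kernel-verified Lean document; each statement's English description precedes it below -/
import Mathlib

section
/- Let d ≥ 2, let X be a real Banach space, let Ω ⊆ ℝ^d be open and non-empty, let 1 < p < ∞ and j, k ∈ {1,…,d}. Suppose there exists a constant C > 0 such that ‖D_jD_k(Φ ∗ f)‖_{L^p(Ω, X)} ≤ C ‖f‖_{L^p(Ω, X)} for all f ∈ C_c^∞(Ω, X) (where f is extended by 0 to ℝ^d to form Φ ∗ f). Then the same estimate holds globally: ‖D_jD_k(Φ ∗ f)‖_{L^p(ℝ^d, X)} ≤ C ‖f‖_{L^p(ℝ^d, X)} for all f ∈ C_c^∞(ℝ^d, X); in particular the second-order Riesz transform R_jR_k extends to a bounded operator on L^p(ℝ^d, X). -/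
open MeasureTheory
open scoped ENNReal

/-- The `i`-th standard basis vector of `ℝ^d`. -/
noncomputable def stdBasis {d : ℕ} (i : Fin d) : EuclideanSpace ℝ (Fin d) :=
  EuclideanSpace.single i (1 : ℝ)

/-- The second-order partial derivative `DⱼDₖ u` of a function `u : ℝ^d → X`. -/
noncomputable def secondPartial {d : ℕ} {X : Type*} [NormedAddCommGroup X]
    [NormedSpace ℝ X] (j k : Fin d) (u : EuclideanSpace ℝ (Fin d) → X)
    (x : EuclideanSpace ℝ (Fin d)) : X :=
  fderiv ℝ (fun y => fderiv ℝ u y (stdBasis k)) x (stdBasis j)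

/-- The fundamental solution of the Laplace equation on `ℝ^d`. -/
noncomputable def fundSol (d : ℕ) (ξ : EuclideanSpace ℝ (Fin d)) : ℝ :=
  if d = 2 then (2 * Real.pi)⁻¹ * Real.log ‖ξ‖
  else ((d : ℝ) * ((2 : ℝ) - d) *
      (volume (Metric.ball (0 : EuclideanSpace ℝ (Fin d)) 1)).toReal)⁻¹ *
    ‖ξ‖ ^ ((2 : ℝ) - d)

/-- The Newtonian potential `Φ ∗ f`. -/
noncomputable def newtonianPotential {d : ℕ} {X : Type*} [NormedAddCommGroup X]
    [NormedSpace ℝ X] [CompleteSpace X] (f : EuclideanSpace ℝ (Fin d) → X)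
    (ξ : EuclideanSpace ℝ (Fin d)) : X :=
  ∫ η, fundSol d (ξ - η) • f η

lemma aux_secondPartial_scale {d : ℕ} {X : Type*} [NormedAddCommGroup X]
    [NormedSpace ℝ X] (j k : Fin d) (u : EuclideanSpace ℝ (Fin d) → X)
    (x₀ : EuclideanSpace ℝ (Fin d)) (n : ℝ) (hn : n ≠ 0) (b : X)
    (x : EuclideanSpace ℝ (Fin d)) :
    secondPartial j k (fun y => (n ^ 2)⁻¹ • u (n • (y - x₀)) + b) x =
      secondPartial j k u (n • (x - x₀)) := by
  have key : ∀ (c : ℝ) (v : EuclideanSpace ℝ (Fin d) → X) (y : EuclideanSpace ℝ (Fin d)),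
      fderiv ℝ (fun y => c • v (n • (y - x₀))) y = (c * n) • fderiv ℝ v (n • (y - x₀)) := by
    intro c v y
    have h1 : (fun y => c • v (n • (y - x₀))) = c • (fun y => v (n • (y - x₀))) := rfl
    rw [h1, fderiv_const_smul_field, Pi.smul_apply,
      fderiv_comp_sub (f := fun z => v (n • z)), fderiv_comp_smul, smul_smul]
  unfold secondPartial
  have h2 : (fun y => fderiv ℝ (fun y => (n ^ 2)⁻¹ • u (n • (y - x₀)) + b) y (stdBasis k)) =
      fun y => ((n ^ 2)⁻¹ * n) • (fun z => fderiv ℝ u z (stdBasis k)) (n • (y - x₀)) := by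
    funext y
    rw [fderiv_add_const, key]
    rfl
  rw [h2, key _ (fun z => fderiv ℝ u z (stdBasis k))]
  have : (n ^ 2)⁻¹ * n * n = 1 := by field_simp
  rw [this, one_smul]

lemma aux_log_integrable {X : Type*} [NormedAddCommGroup X]
    [NormedSpace ℝ X] (f : EuclideanSpace ℝ (Fin 2) → X) (hf : Continuous f)
    (hs : HasCompactSupport f) (ξ : EuclideanSpace ℝ (Fin 2)) :
    Integrable (fun η => Real.log ‖ξ - η‖ • f η) := by
  have hloc : LocallyIntegrable (fun x : EuclideanSpace ℝ (Fin 2) => Real.log ‖x‖) := by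
    rw [locallyIntegrable_iff]
    intro K hK
    obtain ⟨r, hr⟩ := hK.isBounded.subset_ball 0
    refine IntegrableOn.mono_set ?_ hr
    rw [integrableOn_fun_norm_addHaar volume (f := Real.log)]
    have : IntegrableOn (fun y : ℝ => y * Real.log y) (Set.Icc 0 r) :=
      Real.continuous_mul_log.continuousOn.integrableOn_Icc
    simpa using this.mono_set Set.Ioo_subset_Icc_self
  have h := hloc.integrable_smul_right_of_hasCompactSupport
    (g := fun t => f (ξ - t)) (by fun_prop)
    (hs.comp_homeomorph (Homeomorph.subLeft ξ))
  have := (integrable_comp_sub_left (fun t => Real.log ‖t‖ • f (ξ - t)) ξ).2 h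
  simpa using this

lemma aux_potential_scale {d : ℕ} (hd : 2 ≤ d) {X : Type*} [NormedAddCommGroup X]
    [NormedSpace ℝ X] [CompleteSpace X] (f : EuclideanSpace ℝ (Fin d) → X)
    (hf : Continuous f) (hs : HasCompactSupport f)
    (x₀ : EuclideanSpace ℝ (Fin d)) (n : ℝ) (hn : 0 < n) :
    ∃ b : X, newtonianPotential (fun y => f (n • (y - x₀))) =
      fun y => (n ^ 2)⁻¹ • newtonianPotential f (n • (y - x₀)) + b := by
  have hcv : ∀ ξ, newtonianPotential (fun y => f (n • (y - x₀))) ξ =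
      (n ^ d)⁻¹ • ∫ ζ, fundSol d (n⁻¹ • (n • (ξ - x₀) - ζ)) • f ζ := by
    intro ξ
    unfold newtonianPotential
    have h1 := Measure.integral_comp_smul (volume : Measure (EuclideanSpace ℝ (Fin d)))
      (fun ζ => fundSol d (n⁻¹ • (n • (ξ - x₀) - ζ)) • f ζ) n
    rw [finrank_euclideanSpace_fin, abs_of_pos (by positivity)] at h1
    rw [← h1, ← integral_sub_right_eq_self
      (fun x => fundSol d (n⁻¹ • (n • (ξ - x₀) - n • x)) • f (n • x)) x₀]
    congr 1
    funext η
    rw [← smul_sub, smul_smul, inv_mul_cancel₀ hn.ne', one_smul]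
    congr 2
    abel
  by_cases h2 : d = 2
  · subst h2
    refine ⟨(n ^ 2)⁻¹ • ((2 * Real.pi)⁻¹ * -Real.log n) • ∫ ζ, f ζ, ?_⟩
    funext ξ
    rw [hcv, ← smul_add]
    congr 1
    unfold newtonianPotential
    rw [← integral_smul, ← integral_add]
    · apply integral_congr_ae
      have : ∀ᵐ ζ : EuclideanSpace ℝ (Fin 2), ζ ≠ n • (ξ - x₀) := by
        simp [ae_iff]
      filter_upwards [this] with ζ hζ
      have h0 : ‖n • (ξ - x₀) - ζ‖ ≠ 0 := by
        rw [norm_ne_zero_iff, sub_ne_zero]; exact hζ.symm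
      simp only [fundSol, if_true]
      rw [norm_smul, Real.norm_eq_abs, abs_of_pos (inv_pos.2 hn),
        Real.log_mul (inv_pos.2 hn).ne' h0, Real.log_inv, ← add_smul]
      congr 1
      ring
    · have := (aux_log_integrable f hf hs (n • (ξ - x₀))).smul (2 * Real.pi)⁻¹
      simpa [fundSol, smul_smul, Pi.smul_def] using this
    · exact (hf.integrable_of_hasCompactSupport hs).smul _
  · refine ⟨0, ?_⟩
    funext ξ
    rw [hcv, add_zero]
    unfold newtonianPotential
    have h3 : ∀ ζ : EuclideanSpace ℝ (Fin d), fundSol d (n⁻¹ • (n • (ξ - x₀) - ζ)) • f ζ =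
        (n⁻¹ ^ ((2 : ℝ) - d)) • (fundSol d (n • (ξ - x₀) - ζ) • f ζ) := by
      intro ζ
      simp only [fundSol, if_neg h2]
      rw [norm_smul, Real.norm_eq_abs, abs_of_pos (inv_pos.2 hn),
        Real.mul_rpow (inv_pos.2 hn).le (norm_nonneg _), smul_smul]
      congr 1
      ring
    simp_rw [h3]
    rw [integral_smul, smul_smul]
    congr 1
    rw [Real.inv_rpow hn.le, Real.rpow_sub hn, Real.rpow_natCast, Real.rpow_ofNat]
    field_simp

lemma aux_eLpNorm_le_of_ball {d : ℕ} {X : Type*} [NormedAddCommGroup X]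
    (g : EuclideanSpace ℝ (Fin d) → X) (p : ℝ≥0∞) (hp : 1 < p) (hp' : p ≠ ⊤) (A : ℝ≥0∞)
    (N : ℕ) (r : ℝ) (hr : 0 < r)
    (h : ∀ n : ℕ, N ≤ n → eLpNorm g p (volume.restrict (Metric.ball 0 (n * r))) ≤ A) :
    eLpNorm g p volume ≤ A := by
  have hp0 : p ≠ 0 := (zero_lt_one.trans hp).ne'
  have hpos : 0 < p.toReal := ENNReal.toReal_pos hp0 hp'
  have hmono : Monotone fun n : ℕ =>
      Metric.ball (0 : EuclideanSpace ℝ (Fin d)) (n * r) := by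
    intro a b hab
    apply Metric.ball_subset_ball
    gcongr
  have hU : (⋃ n : ℕ, Metric.ball (0 : EuclideanSpace ℝ (Fin d)) (n * r)) = Set.univ := by
    rw [Set.eq_univ_iff_forall]
    intro x
    obtain ⟨n, hn⟩ := exists_nat_gt (‖x‖ / r)
    rw [Set.mem_iUnion]
    exact ⟨n, by rw [mem_ball_zero_iff]; exact (div_lt_iff₀ hr).1 hn⟩
  rw [eLpNorm_eq_lintegral_rpow_enorm_toReal hp0 hp', one_div,
    ENNReal.rpow_inv_le_iff hpos, ← setLIntegral_univ, ← hU,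
    setLIntegral_iUnion_of_directed _ hmono.directed_le]
  refine iSup_le fun n => ?_
  have h1 := h (max N n) (le_max_left _ _)
  rw [eLpNorm_eq_lintegral_rpow_enorm_toReal hp0 hp', one_div, ENNReal.rpow_inv_le_iff hpos] at h1
  exact (lintegral_mono_set (hmono (le_max_right N n))).trans h1

/-- If, on a non-empty open set `Ω ⊆ ℝ^d` (`d ≥ 2`), the estimate
`‖DⱼDₖ(Φ ∗ f)‖_{L^p(Ω,X)} ≤ C ‖f‖_{L^p(Ω,X)}` holds for all `f ∈ C_c^∞(Ω, X)`, then
the same estimate holds globally on `ℝ^d`; in particular the second-order Riesz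
transform `RⱼRₖ = DⱼDₖ(Φ ∗ ·)` is bounded on `L^p(ℝ^d, X)`. -/
theorem newtonian_estimate_on_domain_implies_global {d : ℕ} (hd : 2 ≤ d)
    {X : Type*} [NormedAddCommGroup X] [NormedSpace ℝ X] [CompleteSpace X]
    {Ω : Set (EuclideanSpace ℝ (Fin d))} (hΩ : IsOpen Ω) (hΩne : Ω.Nonempty)
    (p : ℝ≥0∞) (hp : 1 < p) (hp' : p ≠ ⊤) (j k : Fin d) (C : ℝ) (hC : 0 < C)
    (hest : ∀ f : EuclideanSpace ℝ (Fin d) → X, ContDiff ℝ (⊤ : ℕ∞) f →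
      HasCompactSupport f → tsupport f ⊆ Ω →
      eLpNorm (fun ξ => secondPartial j k (newtonianPotential f) ξ) p
          (volume.restrict Ω) ≤
        ENNReal.ofReal C * eLpNorm f p (volume.restrict Ω)) :
    ∀ f : EuclideanSpace ℝ (Fin d) → X, ContDiff ℝ (⊤ : ℕ∞) f → HasCompactSupport f →
      eLpNorm (fun ξ => secondPartial j k (newtonianPotential f) ξ) p volume ≤
        ENNReal.ofReal C * eLpNorm f p volume := by
  intro f hf hs
  obtain ⟨x₀, hx₀⟩ := hΩne
  obtain ⟨r, hr, hball⟩ := Metric.isOpen_iff.1 hΩ x₀ hx₀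
  obtain ⟨R, hR⟩ := hs.isCompact.isBounded.subset_ball (0 : EuclideanSpace ℝ (Fin d))
  obtain ⟨N, hN⟩ := exists_nat_gt (R / r)
  refine aux_eLpNorm_le_of_ball _ p hp hp' _ (N + 1) r hr fun m hm => ?_
  have hm1 : (N : ℝ) + 1 ≤ m := by exact_mod_cast hm
  have hN0 : (0 : ℝ) ≤ N := N.cast_nonneg
  set n : ℝ := (m : ℝ)
  have hn : 0 < n := by linarith
  have hRn : R < n * r := by
    rw [div_lt_iff₀ hr] at hN
    nlinarith
  let T : EuclideanSpace ℝ (Fin d) ≃ₜ EuclideanSpace ℝ (Fin d) :=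
    (Homeomorph.subRight x₀).trans (Homeomorph.smulOfNeZero n hn.ne')
  have hT : ∀ x, T x = n • (x - x₀) := fun x => rfl
  have hTm : MeasurableEmbedding T := T.measurableEmbedding
  have hpre : T ⁻¹' Metric.ball 0 (n * r) ⊆ Ω := by
    intro x hx
    apply hball
    rw [Set.mem_preimage, mem_ball_zero_iff, hT, norm_smul, Real.norm_eq_abs,
      abs_of_pos hn] at hx
    rw [mem_ball_iff_norm]
    exact lt_of_mul_lt_mul_left hx hn.le
  have hsupp : tsupport (f ∘ T) ⊆ Ω := by
    rw [tsupport_comp_eq_preimage]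
    exact (Set.preimage_mono (hR.trans (Metric.ball_subset_ball hRn.le))).trans hpre
  have hsm : ContDiff ℝ (⊤ : ℕ∞) (f ∘ T) :=
    hf.comp ((contDiff_id.sub contDiff_const).const_smul n)
  have key := hest (f ∘ T) hsm (hs.comp_homeomorph T) hsupp
  obtain ⟨b, hb⟩ := aux_potential_scale hd f hf.continuous hs x₀ n hn
  have hg : (fun ξ => secondPartial j k (newtonianPotential (f ∘ T)) ξ) =
      (fun ξ => secondPartial j k (newtonianPotential f) ξ) ∘ T := by
    funext ξ
    have h1 : newtonianPotential (f ∘ T) = newtonianPotential (fun y => f (n • (y - x₀))) := rfl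
    rw [h1, hb]
    exact aux_secondPartial_scale j k _ x₀ n hn.ne' b ξ
  rw [hg] at key
  have hmap : Measure.map T volume =
      ENNReal.ofReal |(n ^ d)⁻¹| • (volume : Measure (EuclideanSpace ℝ (Fin d))) := by
    have h1 := Measure.map_addHaar_smul
      (volume : Measure (EuclideanSpace ℝ (Fin d))) hn.ne'
    rw [finrank_euclideanSpace_fin] at h1
    have h2 : (T : EuclideanSpace ℝ (Fin d) → EuclideanSpace ℝ (Fin d)) =
      (fun x => n • x) ∘ (fun x => x - x₀) := rfl
    rw [h2, ← Measure.map_map (measurable_const_smul n) (by fun_prop : Measurable fun x => x - x₀),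
      map_sub_right_eq_self, h1]
  have hc : 0 < |(n ^ d)⁻¹| := abs_pos.2 (by positivity)
  have hL := (eLpNorm_mono_measure
    ((fun ξ => secondPartial j k (newtonianPotential f) ξ) ∘ T) (p := p)
    (Measure.restrict_mono hpre le_rfl)).trans
    (key.trans (mul_le_mul_right (eLpNorm_mono_measure (f ∘ T) Measure.restrict_le_self) _))
  rw [← hTm.eLpNorm_map_measure, ← hTm.eLpNorm_map_measure, ← hTm.restrict_map, hmap,
    Measure.restrict_smul, eLpNorm_smul_measure_of_ne_top hp',
    eLpNorm_smul_measure_of_ne_top hp', smul_eq_mul, smul_eq_mul, mul_left_comm] at hL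
  refine (ENNReal.mul_le_mul_iff_right ?_ ?_).1 hL
  · exact (ENNReal.rpow_pos (ENNReal.ofReal_pos.2 hc) ENNReal.ofReal_ne_top).ne'
  · exact ENNReal.rpow_ne_top_of_nonneg ENNReal.toReal_nonneg ENNReal.ofReal_ne_top
end

section
/- Let X be a Banach space, 1 < p < ∞, d ≥ 1, and j, k ∈ {1,…,d}. Suppose there exist μ > 0 and C ≥ 0 such that ‖D_jD_k f‖_{L^p(ℝ^d, X)} ≤ C ‖μ f − Δf‖_{L^p(ℝ^d, X)} for all f ∈ C_c^∞(ℝ^d, X). Then the homogeneous function m_∞(ξ) := −ξ_jξ_k/|ξ|² is an L^p(ℝ^d, X) Fourier multiplier; i.e. the operator f ↦ F^{−1}(m_∞ · F f) extends boundedly to L^p(ℝ^d, X). -/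
open MeasureTheory
open scoped ENNReal FourierTransform

/-- The Laplacian `Δu(x) = Σᵢ DᵢDᵢ u (x)` of a function `u : ℝ^d → X`. -/
noncomputable def lap {d : ℕ} {X : Type*} [NormedAddCommGroup X] [NormedSpace ℝ X]
    (u : EuclideanSpace ℝ (Fin d) → X) (x : EuclideanSpace ℝ (Fin d)) : X :=
  ∑ i : Fin d, fderiv ℝ (fun y => fderiv ℝ u y (stdBasis i)) x (stdBasis i)

namespace RieszAux

open Filter Topology
open scoped SchwartzMap LineDeriv

variable {d : ℕ} {X : Type*} [NormedAddCommGroup X] [NormedSpace ℝ X]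

lemma lap_eq (u : EuclideanSpace ℝ (Fin d) → X) (x) :
    lap u x = ∑ i, secondPartial i i u x := rfl

lemma secondPartial_scale (j k : Fin d) (u : EuclideanSpace ℝ (Fin d) → X) (c : ℝ) (x) :
    secondPartial j k (fun y => u (c • y)) x = c ^ 2 • secondPartial j k u (c • x) := by
  unfold secondPartial
  have h1 : (fun y => fderiv ℝ (fun y => u (c • y)) y (stdBasis k)) =
      fun y => c • (fun z => fderiv ℝ u z (stdBasis k)) (c • y) := by
    funext y
    rw [fderiv_comp_smul]
    rfl
  rw [h1]
  have h2 := fderiv_comp_smul (𝕜 := ℝ) (f := fun z => c • fderiv ℝ u z (stdBasis k)) (x := x) c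
  rw [h2]
  by_cases hc : c = 0
  · simp [hc]
  have h3 : fderiv ℝ (fun z => c • fderiv ℝ u z (stdBasis k)) (c • x) =
      c • fderiv ℝ (fun z => fderiv ℝ u z (stdBasis k)) (c • x) := by
    exact congrFun (fderiv_const_smul_field (𝕜 := ℝ) (R := ℝ)
      (f := fun z => fderiv ℝ u z (stdBasis k)) c) (c • x)
  rw [h3]
  simp [smul_smul, sq]

lemma lap_scale (u : EuclideanSpace ℝ (Fin d) → X) (c : ℝ) (x) :
    lap (fun y => u (c • y)) x = c ^ 2 • lap u (c • x) := by
  simp_rw [lap_eq, secondPartial_scale, Finset.smul_sum]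

set_option linter.unusedSectionVars false in
lemma eLpNorm_scale (p : ℝ≥0∞) (hp' : p ≠ ⊤) (c : ℝ) (hc : c ≠ 0) :
    ∃ K : ℝ≥0∞, K ≠ 0 ∧ K ≠ ⊤ ∧ ∀ u : EuclideanSpace ℝ (Fin d) → X,
      eLpNorm (fun x => u (c • x)) p volume = K * eLpNorm u p volume := by
  have hpos : 0 < |(c ^ Module.finrank ℝ (EuclideanSpace ℝ (Fin d)))⁻¹| := by positivity
  refine ⟨ENNReal.ofReal (abs (c ^ Module.finrank ℝ (EuclideanSpace ℝ (Fin d)))⁻¹) ^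
    (1 / p).toReal, ?_, ?_, fun u => ?_⟩
  · intro h
    rw [ENNReal.rpow_eq_zero_iff] at h
    rcases h with h | h
    · exact (ENNReal.ofReal_pos.2 hpos).ne' h.1
    · exact ENNReal.ofReal_ne_top h.1
  · exact ENNReal.rpow_ne_top_of_nonneg ENNReal.toReal_nonneg ENNReal.ofReal_ne_top
  · have hme : MeasurableEmbedding (fun x : EuclideanSpace ℝ (Fin d) => c • x) :=
      (Homeomorph.smulOfNeZero c hc).measurableEmbedding
    have h := hme.eLpNorm_map_measure (g := u) (p := p)
      (μ := (volume : Measure (EuclideanSpace ℝ (Fin d))))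
    rw [Measure.map_addHaar_smul _ hc, eLpNorm_smul_measure_of_ne_top hp'] at h
    rw [← smul_eq_mul, h]
    rfl

/-- The scaled estimate. -/
lemma scaled_est (p : ℝ≥0∞) (hp' : p ≠ ⊤) (j k : Fin d) (mu : ℝ) (hmu : 0 < mu)
    (C : ℝ)
    (hest : ∀ f : EuclideanSpace ℝ (Fin d) → X, ContDiff ℝ (⊤ : ℕ∞) f →
      HasCompactSupport f →
      eLpNorm (fun ξ => secondPartial j k f ξ) p volume ≤
        ENNReal.ofReal C * eLpNorm (fun ξ => mu • f ξ - lap f ξ) p volume)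
    (ε : ℝ) (hε : 0 < ε) (f : EuclideanSpace ℝ (Fin d) → X) (hf : ContDiff ℝ (⊤ : ℕ∞) f)
    (hfc : HasCompactSupport f) :
    eLpNorm (fun ξ => secondPartial j k f ξ) p volume ≤
        ENNReal.ofReal C * eLpNorm (fun ξ => ε • f ξ - lap f ξ) p volume := by
  obtain ⟨c, hc, hc2⟩ : ∃ c : ℝ, 0 < c ∧ mu = c ^ 2 * ε :=
    ⟨√(mu / ε), by positivity, by rw [Real.sq_sqrt (by positivity)]; field_simp⟩
  obtain ⟨K, hK0, hKt, hK⟩ := eLpNorm_scale (d := d) (X := X) p hp' c hc.ne'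
  have h := hest (fun y => f (c • y)) (by fun_prop)
    (hfc.comp_homeomorph (Homeomorph.smulOfNeZero c hc.ne'))
  simp_rw [secondPartial_scale, lap_scale, hc2, mul_smul, ← smul_sub] at h
  have e1 := eLpNorm_const_smul (c ^ 2) (fun x => secondPartial j k f (c • x)) p
    (volume : Measure (EuclideanSpace ℝ (Fin d)))
  have e2 := eLpNorm_const_smul (c ^ 2) (fun x => ε • f (c • x) - lap f (c • x)) p
    (volume : Measure (EuclideanSpace ℝ (Fin d)))
  rw [hK (fun x => secondPartial j k f x)] at e1
  rw [hK (fun x => ε • f x - lap f x)] at e2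
  change eLpNorm ((c ^ 2) • (fun x => secondPartial j k f (c • x))) p volume ≤
    ENNReal.ofReal C * eLpNorm ((c ^ 2) • (fun x => ε • f (c • x) - lap f (c • x))) p volume at h
  rw [e1, e2, ← mul_assoc, ← mul_assoc (‖c ^ 2‖ₑ) K, mul_left_comm (ENNReal.ofReal C)] at h
  refine (ENNReal.mul_le_mul_iff_right ?_ ?_).1 h
  · exact mul_ne_zero (by simp [hc.ne']) hK0
  · exact ENNReal.mul_ne_top (by simp) hKt

lemma secondPartial_schwartz (j k : Fin d) (f : 𝓢(EuclideanSpace ℝ (Fin d), X)) (x) :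
    secondPartial j k f x = (∂_{stdBasis j} (∂_{stdBasis k} f)) x := by
  rw [SchwartzMap.lineDerivOp_apply_eq_fderiv]
  rfl

lemma secondPartial_smul (j : Fin d) (χ : EuclideanSpace ℝ (Fin d) → ℝ)
    (hχ : ContDiff ℝ (⊤ : ℕ∞) χ)
    (f : 𝓢(EuclideanSpace ℝ (Fin d), X)) (x) :
    secondPartial j j (fun y => χ y • f y) x = χ x • secondPartial j j f x +
      ((2 * fderiv ℝ χ x (stdBasis j)) • (∂_{stdBasis j} f) x +
       secondPartial j j χ x • f x) := by
  have hd : Differentiable ℝ χ := hχ.differentiable (by simp)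
  have hf : Differentiable ℝ f := f.differentiable
  have hd' : Differentiable ℝ (fun y => fderiv ℝ χ y (stdBasis j)) := by
    have : ContDiff ℝ 1 (fderiv ℝ χ) := hχ.fderiv_right (by norm_cast)
    exact (this.differentiable (by simp)).clm_apply (differentiable_const _)
  have hf' : Differentiable ℝ ⇑(∂_{stdBasis j} f : 𝓢(EuclideanSpace ℝ (Fin d), X)) := SchwartzMap.differentiable _
  have h1 : (fun y => fderiv ℝ (fun y => χ y • f y) y (stdBasis j)) =
      fun y => χ y • (∂_{stdBasis j} f) y + (fderiv ℝ χ y (stdBasis j)) • f y := by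
    funext y
    rw [fderiv_fun_smul (hd y) (hf y)]
    simp [SchwartzMap.lineDerivOp_apply_eq_fderiv]
  rw [secondPartial_schwartz]
  unfold secondPartial
  rw [h1, fderiv_fun_add ((hd x).fun_smul (hf' x)) ((hd' x).fun_smul (hf x)),
    fderiv_fun_smul (hd x) (hf' x), fderiv_fun_smul (hd' x) (hf x)]
  simp [SchwartzMap.lineDerivOp_apply_eq_fderiv]
  module

lemma lap_smul (χ : EuclideanSpace ℝ (Fin d) → ℝ)
    (hχ : ContDiff ℝ (⊤ : ℕ∞) χ)
    (f : 𝓢(EuclideanSpace ℝ (Fin d), X)) (x) :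
    lap (fun y => χ y • f y) x = χ x • lap f x +
      ((∑ i, (2 * fderiv ℝ χ x (stdBasis i)) • (∂_{stdBasis i} f) x) +
       lap χ x • f x) := by
  simp_rw [lap_eq, secondPartial_smul _ χ hχ, Finset.smul_sum, Finset.sum_smul,
    Finset.sum_add_distrib]

lemma secondPartial_congr (j k : Fin d) {u v : EuclideanSpace ℝ (Fin d) → X} {x}
    (h : u =ᶠ[𝓝 x] v) : secondPartial j k u x = secondPartial j k v x := by
  unfold secondPartial
  have h1 : (fun y => fderiv ℝ u y (stdBasis k)) =ᶠ[𝓝 x]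
      (fun y => fderiv ℝ v y (stdBasis k)) := by
    filter_upwards [h.fderiv (𝕜 := ℝ)] with y hy
    rw [hy]
  rw [h1.fderiv_eq]

lemma schwartz_norm_bound (f : 𝓢(EuclideanSpace ℝ (Fin d), X)) :
    ∃ B : ℝ, 0 ≤ B ∧ ∀ x, ‖f x‖ ≤ B :=
  ⟨SchwartzMap.seminorm ℝ 0 0 f, apply_nonneg _ _, fun x => SchwartzMap.norm_le_seminorm ℝ f x⟩

/-- Passing from test functions to Schwartz functions. -/
lemma schwartz_est (p : ℝ≥0∞) (hp : 1 < p) (j k : Fin d) (C : ℝ) (ε : ℝ)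
    (hest : ∀ f : EuclideanSpace ℝ (Fin d) → X, ContDiff ℝ (⊤ : ℕ∞) f →
      HasCompactSupport f →
      eLpNorm (fun ξ => secondPartial j k f ξ) p volume ≤
        ENNReal.ofReal C * eLpNorm (fun ξ => ε • f ξ - lap f ξ) p volume)
    (f : 𝓢(EuclideanSpace ℝ (Fin d), X)) :
    eLpNorm (fun ξ => secondPartial j k f ξ) p volume ≤
        ENNReal.ofReal C * eLpNorm (fun ξ => ε • f ξ - lap f ξ) p volume := by
  let χ : ContDiffBump (0 : EuclideanSpace ℝ (Fin d)) := ⟨1, 2, by norm_num, by norm_num⟩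
  have hχ : ContDiff ℝ (⊤ : ℕ∞) χ := χ.contDiff
  let χS : 𝓢(EuclideanSpace ℝ (Fin d), ℝ) := χ.hasCompactSupport.toSchwartzMap hχ
  have hχS : ∀ x, χS x = χ x := fun x => rfl
  have hχS' : (χS : EuclideanSpace ℝ (Fin d) → ℝ) = χ := rfl
  choose B1 hB10 hB1 using fun i : Fin d => schwartz_norm_bound (∂_{stdBasis i} χS)
  choose B2 hB20 hB2 using fun i : Fin d =>
    schwartz_norm_bound (∂_{stdBasis i} (∂_{stdBasis i} χS))
  let a : ℕ → ℝ := fun n => 1 / ((n : ℝ) + 1)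
  have ha0 : ∀ n, 0 < a n := fun n => by positivity
  have ha1 : ∀ n, a n ≤ 1 := fun n => by
    simp only [a]; rw [div_le_one (by positivity)]; linarith [(Nat.cast_nonneg n : (0:ℝ) ≤ n)]
  have hat : Tendsto a atTop (𝓝 0) := tendsto_one_div_add_atTop_nhds_zero_nat
  let K : ℝ := (∑ i, 2 * B1 i) + ∑ i, B2 i
  have hs1 : 0 ≤ ∑ i, 2 * B1 i := Finset.sum_nonneg fun i _ => by linarith [hB10 i]
  have hs2 : 0 ≤ ∑ i, B2 i := Finset.sum_nonneg fun i _ => hB20 i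
  let D : Fin d → 𝓢(EuclideanSpace ℝ (Fin d), X) := fun i => ∂_{stdBasis i} f
  let H : EuclideanSpace ℝ (Fin d) → ℝ := fun x => (∑ i, ‖D i x‖) + ‖f x‖
  have hH : MemLp H p volume := by
    refine MemLp.add (memLp_finsetSum _ fun i _ => ?_) (f.memLp p volume).norm
    exact ((D i).memLp p volume).norm
  let F : ℕ → EuclideanSpace ℝ (Fin d) → X := fun n x => χ (a n • x) • f x
  have hFs : ∀ n, ContDiff ℝ (⊤ : ℕ∞) (F n) := fun n =>
    (hχ.comp (contDiff_const_smul (a n))).smul (f.smooth ⊤)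
  have hFc : ∀ n, HasCompactSupport (F n) := fun n =>
    (χ.hasCompactSupport.comp_homeomorph (Homeomorph.smulOfNeZero (a n) (ha0 n).ne')).smul_right
  let G : EuclideanSpace ℝ (Fin d) → X := fun x => ε • f x - lap f x
  have hGm : MemLp G p volume := by
    have e : G = ⇑(ε • f - ∑ i : Fin d, ∂_{stdBasis i} (∂_{stdBasis i} f)) := by
      funext x
      simp [G, lap_eq, secondPartial_schwartz]
    rw [e]
    exact SchwartzMap.memLp _ p volume
  have hbound : ∀ n x, ‖ε • F n x - lap (F n) x‖ ≤ ‖G x‖ + a n * K * H x := by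
    intro n x
    have h1 := lap_smul (fun y => χ (a n • y)) (hχ.comp (contDiff_const_smul (a n))) f x
    have h2 : ε • F n x - lap (F n) x = χ (a n • x) • G x -
        ((∑ i, (2 * fderiv ℝ (fun y => χ (a n • y)) x (stdBasis i)) • D i x) +
        lap (fun y => χ (a n • y)) x • f x) := by
      change ε • F n x - lap (fun y => χ (a n • y) • f y) x = _
      rw [h1]
      simp only [F, G, D]
      module
    have h3 : ‖χ (a n • x) • G x‖ ≤ ‖G x‖ := by
      rw [norm_smul, Real.norm_of_nonneg χ.nonneg]
      exact mul_le_of_le_one_left (norm_nonneg _) χ.le_one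
    have h4 : ∀ i, ‖fderiv ℝ (fun y => χ (a n • y)) x (stdBasis i)‖ ≤ a n * B1 i := by
      intro i
      rw [fderiv_comp_smul]
      have := hB1 i (a n • x)
      rw [SchwartzMap.lineDerivOp_apply_eq_fderiv] at this
      rw [_root_.smul_apply, norm_smul, Real.norm_of_nonneg (ha0 n).le]
      exact mul_le_mul_of_nonneg_left this (ha0 n).le
    have h5 : ‖lap (fun y => χ (a n • y)) x‖ ≤ a n * ∑ i, B2 i := by
      rw [lap_scale, norm_smul, Real.norm_of_nonneg (by positivity)]
      have : ‖lap χ (a n • x)‖ ≤ ∑ i, B2 i := by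
        rw [lap_eq]
        refine norm_sum_le_of_le _ fun i _ => ?_
        have := hB2 i (a n • x)
        rwa [← secondPartial_schwartz] at this
      have h6 : a n ^ 2 ≤ a n := by nlinarith [ha0 n, ha1 n]
      exact mul_le_mul h6 this (norm_nonneg _) (ha0 n).le
    rw [h2]
    refine (norm_sub_le _ _).trans (add_le_add h3 ?_)
    refine (norm_add_le _ _).trans ?_
    have h7 : ‖∑ i, (2 * fderiv ℝ (fun y => χ (a n • y)) x (stdBasis i)) • D i x‖
        ≤ a n * K * ∑ i, ‖D i x‖ := by
      rw [Finset.mul_sum]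
      refine norm_sum_le_of_le _ fun i _ => ?_
      rw [norm_smul, norm_mul]
      refine mul_le_mul_of_nonneg_right ?_ (norm_nonneg _)
      have h8 : 2 * B1 i ≤ ∑ i, 2 * B1 i :=
        Finset.single_le_sum (f := fun i => 2 * B1 i)
          (fun i _ => by linarith [hB10 i]) (Finset.mem_univ i)
      have h9 : 2 * B1 i ≤ K := by simp only [K]; linarith
      have := h4 i
      have h10 := mul_le_mul_of_nonneg_left h9 (ha0 n).le
      rw [show ‖(2:ℝ)‖ = 2 by norm_num]
      linarith
    have h11 : ‖lap (fun y => χ (a n • y)) x • f x‖ ≤ a n * K * ‖f x‖ := by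
      rw [norm_smul]
      refine mul_le_mul_of_nonneg_right (h5.trans ?_) (norm_nonneg _)
      refine mul_le_mul_of_nonneg_left ?_ (ha0 n).le
      simp only [K]; linarith
    simp only [H]
    rw [mul_add]
    exact add_le_add h7 h11
  have hnorm : ∀ n, eLpNorm (fun ξ => ε • F n ξ - lap (F n) ξ) p volume ≤
      eLpNorm G p volume + ENNReal.ofReal (a n * K) * eLpNorm H p volume := by
    intro n
    have h1 : eLpNorm (fun ξ => ε • F n ξ - lap (F n) ξ) p volume ≤
        eLpNorm ((fun x => ‖G x‖) + (a n * K) • H) p volume :=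
      eLpNorm_mono_real (hbound n)
    refine h1.trans ((eLpNorm_add_le hGm.norm.1 (hH.1.const_smul _) hp.le).trans ?_)
    rw [eLpNorm_norm, eLpNorm_const_smul, Real.enorm_of_nonneg
      (mul_nonneg (ha0 n).le (add_nonneg hs1 hs2))]
  have hFsec : ∀ n, ∀ x, secondPartial j k (F n) x =
      secondPartial j k ((hFc n).toSchwartzMap (hFs n)) x := fun n x => rfl
  refine (Lp.eLpNorm_lim_le_liminf_eLpNorm (f := fun n x => secondPartial j k (F n) x)
    (fun n => ?_) _ (ae_of_all _ fun x => ?_)).trans ?_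
  · simp_rw [hFsec, secondPartial_schwartz]
    exact (SchwartzMap.continuous _).aestronglyMeasurable
  · refine tendsto_const_nhds.congr' ?_
    have h1 : Tendsto (fun n => a n * (‖x‖ + 1)) atTop (𝓝 0) := by
      simpa using hat.mul_const (‖x‖ + 1)
    filter_upwards [h1.eventually (gt_mem_nhds one_pos)] with n hn
    refine (secondPartial_congr j k ?_).symm
    filter_upwards [Metric.ball_mem_nhds x one_pos] with y hy
    have h2 : χ (a n • y) = 1 := by
      apply χ.one_of_mem_closedBall
      rw [mem_closedBall_zero_iff, norm_smul, Real.norm_of_nonneg (ha0 n).le]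
      have : ‖y‖ ≤ ‖x‖ + 1 := by
        have h3 := norm_le_norm_add_norm_sub' y x
        rw [mem_ball_iff_norm] at hy
        linarith
      exact (mul_le_mul_of_nonneg_left this (ha0 n).le).trans hn.le
    simp [F, h2]
  · have hlim : Tendsto (fun n => ENNReal.ofReal C *
        (eLpNorm G p volume + ENNReal.ofReal (a n * K) * eLpNorm H p volume)) atTop
        (𝓝 (ENNReal.ofReal C * eLpNorm G p volume)) := by
      refine ENNReal.Tendsto.const_mul ?_ (Or.inr ENNReal.ofReal_ne_top)
      have h1 : Tendsto (fun n => ENNReal.ofReal (a n * K)) atTop (𝓝 0) := by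
        have := ENNReal.tendsto_ofReal (hat.mul_const K)
        simpa using this
      have h2 := ENNReal.Tendsto.mul_const h1 (b := eLpNorm H p volume)
        (Or.inr hH.eLpNorm_ne_top)
      simpa using h2.const_add (eLpNorm G p volume)
    rw [← hlim.liminf_eq]
    refine liminf_le_liminf (Eventually.of_forall fun n => ?_)
    exact (hest (F n) (hFs n) (hFc n)).trans (mul_le_mul_right (hnorm n) _)

end RieszAux

namespace RieszAux

open Filter Topology
open scoped SchwartzMap LineDeriv Laplacian

variable {d : ℕ} {X : Type*} [NormedAddCommGroup X] [NormedSpace ℂ X]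

lemma lap_schwartz (f : 𝓢(EuclideanSpace ℝ (Fin d), X)) (x) :
    lap f x = (Δ f) x := by
  rw [SchwartzMap.laplacian_eq_sum (EuclideanSpace.basisFun (Fin d) ℝ), lap_eq]
  simp [secondPartial_schwartz, stdBasis]

/-- The resolvent symbol. -/
noncomputable def sym (N : ℝ) (ξ : EuclideanSpace ℝ (Fin d)) : ℝ :=
  (N ^ 2 / (2 * Real.pi) ^ 2) * (1 + ‖N • ξ‖ ^ 2) ^ (-1 : ℝ)

lemma sym_eq (N : ℝ) (ξ : EuclideanSpace ℝ (Fin d)) :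
    sym N ξ = (N ^ 2 / (2 * Real.pi) ^ 2) / (1 + N ^ 2 * ‖ξ‖ ^ 2) := by
  rw [sym, Real.rpow_neg_one, norm_smul, mul_pow ‖N‖, Real.norm_eq_abs, sq_abs]
  rfl

lemma sym_temperate (N : ℝ) : (sym (d := d) N).HasTemperateGrowth := by
  have h1 := Function.hasTemperateGrowth_one_add_norm_sq_rpow
    (H := EuclideanSpace ℝ (Fin d)) (-1)
  have h2 : (fun ξ : EuclideanSpace ℝ (Fin d) => N • ξ).HasTemperateGrowth :=
    (N • ContinuousLinearMap.id ℝ (EuclideanSpace ℝ (Fin d))).hasTemperateGrowth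
  exact (Function.HasTemperateGrowth.const _).mul (h1.comp h2)

variable [CompleteSpace X]

/-- The resolvent applied to `g`. -/
noncomputable def res (N : ℝ) (g : 𝓢(EuclideanSpace ℝ (Fin d), X)) :
    𝓢(EuclideanSpace ℝ (Fin d), X) :=
  SchwartzMap.fourierMultiplierCLM X (sym (d := d) N) g

lemma res_eq (N : ℝ) (hN : 0 < N) (g : 𝓢(EuclideanSpace ℝ (Fin d), X)) :
    ((2 * Real.pi) ^ 2 / N ^ 2) • res N g - Δ (res N g) = g := by
  have ht := sym_temperate (d := d) N
  have hq : (fun ξ : EuclideanSpace ℝ (Fin d) => ‖ξ‖ ^ 2).HasTemperateGrowth := by fun_prop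
  rw [SchwartzMap.laplacian_eq_fourierMultiplierCLM, res,
    SchwartzMap.fourierMultiplierCLM_fourierMultiplierCLM_apply hq ht]
  simp_rw [SchwartzMap.fourierMultiplierCLM_apply]
  rw [neg_smul, sub_neg_eq_add, ← FourierTransform.fourierInv_smul,
    ← FourierTransform.fourierInv_smul, ← FourierTransform.fourierInv_add]
  have : ((2 * Real.pi) ^ 2 / N ^ 2) • SchwartzMap.smulLeftCLM X (sym N) (𝓕 g) +
      (2 * Real.pi) ^ 2 • SchwartzMap.smulLeftCLM X
        ((fun ξ : EuclideanSpace ℝ (Fin d) => ‖ξ‖ ^ 2) * sym N) (𝓕 g) = 𝓕 g := by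
    ext ξ
    rw [_root_.add_apply, _root_.smul_apply, _root_.smul_apply,
      SchwartzMap.smulLeftCLM_apply_apply ht, SchwartzMap.smulLeftCLM_apply_apply (hq.mul ht),
      smul_smul, smul_smul, ← add_smul, Pi.mul_apply, sym_eq]
    have hpi := Real.pi_pos
    have h1 : 0 < 1 + N ^ 2 * ‖ξ‖ ^ 2 := by positivity
    convert one_smul ℝ _ using 2
    field_simp
  rw [this, FourierTransform.fourierInv_fourier_eq]

lemma res_deriv (N : ℝ) (j k : Fin d) (g : 𝓢(EuclideanSpace ℝ (Fin d), X)) (x) :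
    secondPartial j k (res N g) x =
      𝓕⁻ (fun ξ => (-(ξ j * ξ k) * (N ^ 2 / (1 + N ^ 2 * ‖ξ‖ ^ 2)) : ℝ) •
        𝓕 (g : EuclideanSpace ℝ (Fin d) → X) ξ) x := by
  have ht := sym_temperate (d := d) N
  have hj : ∀ j : Fin d, (fun ξ : EuclideanSpace ℝ (Fin d) =>
    inner ℝ ξ (stdBasis j)).HasTemperateGrowth := fun j => by fun_prop
  have hj' : ∀ (j : Fin d) (ξ : EuclideanSpace ℝ (Fin d)), inner ℝ ξ (stdBasis j) = ξ j := by
    intro j ξ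
    simp [stdBasis, EuclideanSpace.inner_single_right]
  rw [secondPartial_schwartz, SchwartzMap.lineDeriv_eq_fourierMultiplierCLM (stdBasis k), res,
    SchwartzMap.fourierMultiplierCLM_fourierMultiplierCLM_apply (hj k) ht]
  rw [LineDeriv.lineDerivOp_smul, SchwartzMap.lineDeriv_eq_fourierMultiplierCLM (stdBasis j),
    SchwartzMap.fourierMultiplierCLM_fourierMultiplierCLM_apply (hj j) ((hj k).mul ht),
    SchwartzMap.fourierMultiplierCLM_apply, smul_smul, ← FourierTransform.fourierInv_smul,
    SchwartzMap.fourierInv_coe]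
  refine congrFun (congrArg _ (funext fun ξ => ?_)) x
  rw [_root_.smul_apply, SchwartzMap.smulLeftCLM_apply_apply ((hj j).mul ((hj k).mul ht)),
    SchwartzMap.fourier_coe]
  have : (2 * (Real.pi : ℂ) * Complex.I * (2 * Real.pi * Complex.I)) =
      ((-(2 * Real.pi) ^ 2 : ℝ) : ℂ) := by
    push_cast
    linear_combination (4 * (Real.pi : ℂ) ^ 2) * Complex.I_sq
  rw [this, Complex.coe_smul, smul_smul, Pi.mul_apply, Pi.mul_apply, hj', hj', sym_eq]
  congr 1
  have hpi := Real.pi_pos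
  have h1 : 0 < 1 + N ^ 2 * ‖ξ‖ ^ 2 := by positivity
  field_simp

lemma tendsto_fourierInv (j k : Fin d) (g : 𝓢(EuclideanSpace ℝ (Fin d), X)) (x) :
    Tendsto (fun n : ℕ => 𝓕⁻ (fun ξ : EuclideanSpace ℝ (Fin d) =>
        (-(ξ j * ξ k) * (((n : ℝ) + 1) ^ 2 / (1 + ((n : ℝ) + 1) ^ 2 * ‖ξ‖ ^ 2)) : ℝ) •
        𝓕 (g : EuclideanSpace ℝ (Fin d) → X) ξ) x) atTop
      (𝓝 (𝓕⁻ (fun ξ => (-(ξ j * ξ k) / ‖ξ‖ ^ 2 : ℝ) •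
        𝓕 (g : EuclideanSpace ℝ (Fin d) → X) ξ) x)) := by
  simp_rw [Real.fourierInv_eq']
  have hc : Continuous (𝓕 (g : EuclideanSpace ℝ (Fin d) → X)) := by
    rw [← SchwartzMap.fourier_coe]
    exact SchwartzMap.continuous _
  refine tendsto_integral_of_dominated_convergence
    (fun ξ => ‖𝓕 (g : EuclideanSpace ℝ (Fin d) → X) ξ‖) (fun n => ?_) ?_ (fun n => ?_) ?_
  · have h0 : ∀ ξ : EuclideanSpace ℝ (Fin d), 1 + ((n : ℝ) + 1) ^ 2 * ‖ξ‖ ^ 2 ≠ 0 :=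
      fun ξ => by positivity
    have h1 : Continuous (fun ξ : EuclideanSpace ℝ (Fin d) =>
        -(ξ j * ξ k) * (((n : ℝ) + 1) ^ 2 / (1 + ((n : ℝ) + 1) ^ 2 * ‖ξ‖ ^ 2))) := by
      refine Continuous.mul (by fun_prop) (Continuous.div (by fun_prop) (by fun_prop) h0)
    exact (Continuous.smul (by fun_prop) (h1.smul hc)).aestronglyMeasurable
  · rw [← SchwartzMap.fourier_coe]
    exact (SchwartzMap.integrable _).norm
  · refine ae_of_all _ fun ξ => ?_
    rw [norm_smul, Complex.norm_exp_ofReal_mul_I, one_mul, norm_smul]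
    refine mul_le_of_le_one_left (norm_nonneg _) ?_
    have hj : |ξ j| ≤ ‖ξ‖ := PiLp.norm_apply_le ξ j
    have hk : |ξ k| ≤ ‖ξ‖ := PiLp.norm_apply_le ξ k
    have h1 : |ξ j| * |ξ k| ≤ ‖ξ‖ ^ 2 := by
      rw [sq]; exact mul_le_mul hj hk (abs_nonneg _) (norm_nonneg _)
    have h2 : 0 < 1 + ((n : ℝ) + 1) ^ 2 * ‖ξ‖ ^ 2 := by positivity
    rw [norm_mul, norm_neg, norm_mul, Real.norm_eq_abs, Real.norm_eq_abs,
      Real.norm_of_nonneg (by positivity), ← mul_div_assoc, div_le_one h2]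
    nlinarith [mul_le_mul_of_nonneg_left h1 (sq_nonneg ((n : ℝ) + 1))]
  · refine ae_of_all _ fun ξ => ?_
    refine Tendsto.const_smul (Tendsto.smul_const ?_ _) _
    by_cases hξ : ξ = 0
    · simp [hξ]
    have hξ' : ‖ξ‖ ≠ 0 := norm_ne_zero_iff.2 hξ
    have h1 : Tendsto (fun n : ℕ => (1 / ((n : ℝ) + 1)) ^ 2 + ‖ξ‖ ^ 2) atTop
        (𝓝 (‖ξ‖ ^ 2)) := by
      simpa using (tendsto_one_div_add_atTop_nhds_zero_nat (𝕜 := ℝ)).pow 2 |>.add_const (‖ξ‖ ^ 2)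
    have h2 := (tendsto_const_nhds (x := -(ξ j * ξ k))).div h1 (pow_ne_zero 2 hξ')
    refine h2.congr fun n => ?_
    have h3 : (0:ℝ) < 1 + ((n : ℝ) + 1) ^ 2 * ‖ξ‖ ^ 2 := by positivity
    have h4 : (0:ℝ) < (n : ℝ) + 1 := by positivity
    have h5 : 0 < ‖ξ‖ := norm_pos_iff.2 hξ
    have h6 : (0:ℝ) < (1 / ((n : ℝ) + 1)) ^ 2 + ‖ξ‖ ^ 2 := by positivity
    simp only [Pi.div_apply]
    rw [← mul_div_assoc, div_eq_div_iff h6.ne' h3.ne']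
    field_simp

end RieszAux

/-- If `‖DⱼDₖ f‖_{L^p} ≤ C ‖μf − Δf‖_{L^p}` for all
`f ∈ C_c^∞(ℝ^d, X)`, then the homogeneous function `m_∞(ξ) = -ξⱼξₖ/|ξ|²` is an
`L^p(ℝ^d, X)` Fourier multiplier: the operator `f ↦ 𝓕⁻(m_∞ · 𝓕 f)` is bounded in the
`L^p` norm on the dense class `C_c^∞(ℝ^d, X)` (hence extends boundedly). -/
theorem resolvent_estimate_implies_riesz_multiplier {d : ℕ} (hd : 1 ≤ d)
    {X : Type*} [NormedAddCommGroup X] [NormedSpace ℂ X] [CompleteSpace X]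
    (p : ℝ≥0∞) (hp : 1 < p) (hp' : p ≠ ⊤) (j k : Fin d) (mu : ℝ) (hmu : 0 < mu)
    (C : ℝ) (hC : 0 ≤ C)
    (hest : ∀ f : EuclideanSpace ℝ (Fin d) → X, ContDiff ℝ (⊤ : ℕ∞) f →
      HasCompactSupport f →
      eLpNorm (fun ξ => secondPartial j k f ξ) p volume ≤
        ENNReal.ofReal C * eLpNorm (fun ξ => mu • f ξ - lap f ξ) p volume) :
    ∃ C' : ℝ, 0 ≤ C' ∧
      ∀ f : EuclideanSpace ℝ (Fin d) → X, ContDiff ℝ (⊤ : ℕ∞) f → HasCompactSupport f →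
        eLpNorm (𝓕⁻ (fun ξ => (-(ξ j * ξ k) / ‖ξ‖ ^ 2 : ℝ) • 𝓕 f ξ)) p volume ≤
          ENNReal.ofReal C' * eLpNorm f p volume := by

  refine ⟨C, hC, fun f hf hfc => ?_⟩
  let g : SchwartzMap (EuclideanSpace ℝ (Fin d)) X := hfc.toSchwartzMap hf
  have hN : ∀ n : ℕ, (0 : ℝ) < (n : ℝ) + 1 := fun n => by positivity
  refine (Lp.eLpNorm_lim_le_liminf_eLpNorm
    (f := fun (n : ℕ) x => secondPartial j k (RieszAux.res ((n : ℝ) + 1) g) x)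
    (fun n => ?_) _ (ae_of_all _ fun x => ?_)).trans ?_
  · simp_rw [RieszAux.secondPartial_schwartz]
    exact (SchwartzMap.continuous _).aestronglyMeasurable
  · simp_rw [RieszAux.res_deriv]
    exact RieszAux.tendsto_fourierInv j k g x
  · refine Filter.liminf_le_of_le (by isBoundedDefault) fun b hb => ?_
    obtain ⟨n, hn⟩ := hb.exists
    refine hn.trans ?_
    have hε : 0 < (2 * Real.pi) ^ 2 / ((n : ℝ) + 1) ^ 2 := by
      have := Real.pi_pos
      positivity
    have h := RieszAux.schwartz_est p hp j k C _
      (RieszAux.scaled_est p hp' j k mu hmu C hest _ hε) (RieszAux.res ((n : ℝ) + 1) g)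
    refine h.trans (le_of_eq ?_)
    congr 2
    funext x
    rw [RieszAux.lap_schwartz]
    exact congrArg (fun u : SchwartzMap (EuclideanSpace ℝ (Fin d)) X => u x)
      (RieszAux.res_eq ((n : ℝ) + 1) (hN n) g)
end
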